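/- For every rational α ∈ (0,1/2) and every v ∈ (0,1), there exists an explicit constant C₁(v,α) > 0 such that liminf_{β→∞} liminf_{N→∞} β · E[ T(v,α)² − ⟨R₁₂²⟩_v ] > C₁(v,α), where the inner liminf is over integers N with αN an integer. -/

import Mathlib

open Finset MeasureTheory ProbabilityTheory

noncomputable section

/-- The law of the independent Gaussian entries used to build a GOE matrix: a product of
centered real Gaussians indexed by pairs `(i,j)`, with variance `2` on the diagonal and `1`
off the diagonal.  (Only the coordinates with `i ≤ j` are ever read off, so this realizes a
GOE matrix: the entries `(J_{ij})_{i≤j}` are independent centered Gaussians with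
`Var(J_{ij}) = 1` for `i < j` and `Var(J_{ii}) = 2`.) -/
def goeMeasure (N : ℕ) : Measure ((Fin N × Fin N) → ℝ) :=
  Measure.pi fun p => gaussianReal 0 (if p.1 = p.2 then 2 else 1)

/-- The symmetric (GOE) matrix built from the sample `ω`. -/
def Jmat {N : ℕ} (ω : (Fin N × Fin N) → ℝ) (i j : Fin N) : ℝ :=
  if i ≤ j then ω (i, j) else ω (j, i)

/-- The value `±1` of a Boolean spin. -/
def spin (b : Bool) : ℝ := if b then 1 else -1

/-- The configuration space `S_N(α) = {σ ∈ {−1,1}^N : ∑ᵢ σᵢ = N(2α−1)}`. -/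
def SNset (N : ℕ) (α : ℚ) : Set (Fin N → Bool) :=
  {σ | ∑ i, spin (σ i) = (N : ℝ) * (2 * (α : ℝ) - 1)}

open Classical in
/-- `S_N(α)` as a finite set. -/
def SNfinset (N : ℕ) (α : ℚ) : Finset (Fin N → Bool) :=
  Finset.univ.filter fun σ => ∑ i, spin (σ i) = (N : ℝ) * (2 * (α : ℝ) - 1)

/-- `H_0(σ) = N^{-1/2} ∑_{i,j} J_{ij} σ_i σ_j`. -/
def H0 {N : ℕ} (ω : (Fin N × Fin N) → ℝ) (σ : Fin N → Bool) : ℝ :=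
  (Real.sqrt N)⁻¹ * ∑ i, ∑ j, Jmat ω i j * spin (σ i) * spin (σ j)

/-- `g_i = N^{-1/2} ∑_j J_{ij}`. -/
def gvec {N : ℕ} (ω : (Fin N × Fin N) → ℝ) (i : Fin N) : ℝ :=
  (Real.sqrt N)⁻¹ * ∑ j, Jmat ω i j

/-- `H_1(σ) = H_0(σ) − 2(2α−1) ∑ᵢ gᵢ σᵢ + (2α−1)² N^{-1/2} ∑_{i,j} J_{ij}`. -/
def H1 {N : ℕ} (α : ℚ) (ω : (Fin N × Fin N) → ℝ) (σ : Fin N → Bool) : ℝ :=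
  H0 ω σ - 2 * (2 * (α : ℝ) - 1) * ∑ i, gvec ω i * spin (σ i)
    + (2 * (α : ℝ) - 1) ^ 2 * ((Real.sqrt N)⁻¹ * ∑ i, ∑ j, Jmat ω i j)

/-- `E[max_{σ ∈ S_N(α)} H(σ)]`, the expectation over the GOE matrix of the maximum of a
Hamiltonian `H` over the configuration space `S_N(α)`. -/
def Emax (N : ℕ) (α : ℚ) (H : ((Fin N × Fin N) → ℝ) → (Fin N → Bool) → ℝ) : ℝ :=
  ∫ ω, sSup ((H ω) '' SNset N α) ∂(goeMeasure N)

end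

/-- `α N` is a (nonnegative) integer. -/
def alphaIntegral (α : ℚ) (N : ℕ) : Prop := ∃ k : ℕ, α * (N : ℚ) = (k : ℚ)

noncomputable section

/-- The interpolating Hamiltonian
`H_v(σ) = N^{-1/2} ∑_{i,j} J_{ij}(σ_i − √v(2α−1))(σ_j − √v(2α−1))`. -/
def Hv {N : ℕ} (α : ℚ) (v : ℝ) (ω : (Fin N × Fin N) → ℝ) (σ : Fin N → Bool) : ℝ :=
  (Real.sqrt N)⁻¹ * ∑ i, ∑ j, Jmat ω i j *
    (spin (σ i) - Real.sqrt v * (2 * (α : ℝ) - 1)) *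
    (spin (σ j) - Real.sqrt v * (2 * (α : ℝ) - 1))

/-- The interpolating free energy
`F_N(v,β;α) = N^{-1} E[log ∑_{σ ∈ S_N(α)} exp(β H_v(σ))]`. -/
def FN (N : ℕ) (α : ℚ) (v β : ℝ) : ℝ :=
  (N : ℝ)⁻¹ * ∫ ω, Real.log (∑ σ ∈ SNfinset N α, Real.exp (β * Hv α v ω σ)) ∂(goeMeasure N)

/-- The overlap `R₁₂ = N^{-1} ∑ᵢ τ¹ᵢ τ²ᵢ` of two configurations, where
`τᵢ = σᵢ − √v(2α−1)`. -/
def R12 {N : ℕ} (α : ℚ) (v : ℝ) (σ₁ σ₂ : Fin N → Bool) : ℝ :=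
  (N : ℝ)⁻¹ * ∑ i, (spin (σ₁ i) - Real.sqrt v * (2 * (α : ℝ) - 1)) *
    (spin (σ₂ i) - Real.sqrt v * (2 * (α : ℝ) - 1))

/-- `T(v,α) = α(1−√v(2α−1))² + (1−α)(1+√v(2α−1))²`. -/
def Tva (α : ℚ) (v : ℝ) : ℝ :=
  (α : ℝ) * (1 - Real.sqrt v * (2 * (α : ℝ) - 1)) ^ 2 +
    (1 - (α : ℝ)) * (1 + Real.sqrt v * (2 * (α : ℝ) - 1)) ^ 2

/-- The two-replica Gibbs average `⟨h⟩_v` at fixed disorder `ω`: the average of `h` over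
two independent samples from the Gibbs measure on `S_N(α)` proportional to `exp(β H_v(σ))`. -/
def gibbs2 (N : ℕ) (α : ℚ) (v β : ℝ) (ω : (Fin N × Fin N) → ℝ)
    (h : (Fin N → Bool) → (Fin N → Bool) → ℝ) : ℝ :=
  (∑ σ₁ ∈ SNfinset N α, ∑ σ₂ ∈ SNfinset N α,
      h σ₁ σ₂ * Real.exp (β * Hv α v ω σ₁) * Real.exp (β * Hv α v ω σ₂)) /
    (∑ σ ∈ SNfinset N α, Real.exp (β * Hv α v ω σ)) ^ 2

/-- `E[⟨h⟩_v]`: the expectation over the disorder of the two-replica Gibbs average. -/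
def Egibbs2 (N : ℕ) (α : ℚ) (v β : ℝ)
    (h : (Fin N → Bool) → (Fin N → Bool) → ℝ) : ℝ :=
  ∫ ω, gibbs2 N α v β ω h ∂(goeMeasure N)

end

open scoped NNReal

lemma aux_stein1 (w : ℝ≥0) (hw : w ≠ 0) (f f' : ℝ → ℝ) (C : ℝ)
    (hf : ∀ x, HasDerivAt f (f' x) x) (hfm : Measurable f) (hfm' : Measurable f')
    (hb : ∀ x, |f x| ≤ C) (hb' : ∀ x, |f' x| ≤ C) :
    ∫ x, x * f x ∂(gaussianReal 0 w) = w * ∫ x, f' x ∂(gaussianReal 0 w) := by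
  have hw0 : (w : ℝ) ≠ 0 := by exact_mod_cast hw
  set g := gaussianPDFReal 0 w with hg
  have hgd : ∀ x, HasDerivAt g (-(x / w) * g x) x := by
    intro x
    rw [hg, gaussianPDFReal_def]
    have h1 : HasDerivAt (fun x : ℝ => -(x - 0) ^ 2 / (2 * (w : ℝ))) (-(x / w)) x := by
      have := (((hasDerivAt_id x).sub_const 0).pow 2).neg.div_const (2 * (w : ℝ))
      refine this.congr_deriv ?_
      simp
      field_simp
    refine (h1.exp.const_mul _).congr_deriv ?_
    ring
  have hgi : Integrable g := integrable_gaussianPDFReal 0 w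
  have hxg : Integrable (fun x => x * g x) := by
    have h0 : Integrable (fun x : ℝ => x) (gaussianReal 0 w) :=
      (memLp_one_iff_integrable.1 (memLp_id_gaussianReal 1))
    rw [gaussianReal_of_var_ne_zero _ hw] at h0
    rw [integrable_withDensity_iff (measurable_gaussianPDF _ _)
      (ae_of_all _ fun _ => gaussianPDF_lt_top)] at h0
    simpa [toReal_gaussianPDF] using h0
  have i1 : Integrable (fun x => f x * (-(x / w) * g x)) := by
    have : Integrable (fun x => f x * (x * g x)) :=
      hxg.bdd_mul hfm.aestronglyMeasurable (c := C) (ae_of_all _ (fun x => by simpa using hb x))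
    refine (this.const_mul (-(1 / (w : ℝ)))).congr (ae_of_all _ fun x => ?_)
    simp only []
    ring
  have i2 : Integrable (fun x => f' x * g x) :=
    hgi.bdd_mul hfm'.aestronglyMeasurable (c := C) (ae_of_all _ (fun x => by simpa using hb' x))
  have i3 : Integrable (fun x => f x * g x) :=
    hgi.bdd_mul hfm.aestronglyMeasurable (c := C) (ae_of_all _ (fun x => by simpa using hb x))
  have key := integral_mul_deriv_eq_deriv_mul_of_integrable (fun x _ => hf x) (fun x _ => hgd x) i1 i2 i3
  rw [integral_gaussianReal_eq_integral_smul hw, integral_gaussianReal_eq_integral_smul hw]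
  simp only [smul_eq_mul]
  have e1 : ∫ x, g x * (x * f x) = -(w : ℝ) * ∫ x, f x * (-(x / w) * g x) := by
    rw [← integral_const_mul]
    congr 1; ext x; field_simp
  have e2 : ∫ x, g x * f' x = ∫ x, f' x * g x := by
    congr 1; ext x; ring
  rw [e1, e2, key]; ring

set_option linter.unusedSectionVars false

section prodgauss
variable {P : Type*} [Fintype P] [DecidableEq P]

lemma aux_update_mp (w : P → ℝ≥0) (p : P) :
    MeasurePreserving (fun z : ℝ × (P → ℝ) => Function.update z.2 p z.1)
      ((gaussianReal 0 (w p)).prod (Measure.pi fun q => gaussianReal 0 (w q)))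
      (Measure.pi fun q => gaussianReal 0 (w q)) := by
  have hm : Measurable (fun z : ℝ × (P → ℝ) => Function.update z.2 p z.1) := by
    rw [measurable_pi_iff]
    intro q
    by_cases h : q = p
    · subst h; simpa using measurable_fst
    · simp only [Function.update_of_ne h]; fun_prop
  refine ⟨hm, ?_⟩
  symm
  refine Measure.pi_eq fun s hs => ?_
  rw [Measure.map_apply hm (MeasurableSet.univ_pi hs)]
  have : (fun z : ℝ × (P → ℝ) => Function.update z.2 p z.1) ⁻¹' (Set.univ.pi s)
      = (s p) ×ˢ (Set.univ.pi (Function.update s p Set.univ)) := by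
    ext z
    simp only [Set.mem_preimage, Set.mem_pi, Set.mem_univ, true_implies, Set.mem_prod]
    constructor
    · intro h
      refine ⟨by simpa using h p, fun q => ?_⟩
      by_cases hq : q = p
      · subst hq; simp
      · simpa [Function.update_of_ne hq] using h q
    · rintro ⟨h1, h2⟩ q
      by_cases hq : q = p
      · subst hq; simpa using h1
      · simpa [Function.update_of_ne hq] using h2 q
  rw [this, Measure.prod_prod, Measure.pi_pi]
  rw [← Finset.mul_prod_erase univ (fun i => (gaussianReal 0 (w i)) (s i)) (Finset.mem_univ p),
    ← Finset.mul_prod_erase univ (fun i => (gaussianReal 0 (w i)) (Function.update s p Set.univ i))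
      (Finset.mem_univ p)]
  simp only [Function.update_self, measure_univ, one_mul]
  congr 1
  refine Finset.prod_congr rfl fun q hq => ?_
  rw [Function.update_of_ne (Finset.ne_of_mem_erase hq)]

lemma aux_int_coord (w : P → ℝ≥0) (p : P) :
    Integrable (fun ω : P → ℝ => ω p) (Measure.pi fun q => gaussianReal 0 (w q)) := by
  have h0 : Integrable (fun x : ℝ => x) (gaussianReal 0 (w p)) :=
      (memLp_one_iff_integrable.1 (memLp_id_gaussianReal 1))
  exact (measurePreserving_eval (fun q => gaussianReal 0 (w q)) p).integrable_comp_of_integrable h0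

lemma aux_stein (w : P → ℝ≥0) (p : P) (hw : w p ≠ 0) (G G' : (P → ℝ) → ℝ) (C : ℝ)
    (hG : Measurable G) (hG' : Measurable G') (hb : ∀ ω, |G ω| ≤ C) (hb' : ∀ ω, |G' ω| ≤ C)
    (hd : ∀ ω x, HasDerivAt (fun y => G (Function.update ω p y)) (G' (Function.update ω p x)) x) :
    ∫ ω, ω p * G ω ∂(Measure.pi fun q => gaussianReal 0 (w q))
      = w p * ∫ ω, G' ω ∂(Measure.pi fun q => gaussianReal 0 (w q)) := by
  have mp := aux_update_mp w p
  have i1 : Integrable (fun ω : P → ℝ => ω p * G ω) (Measure.pi fun q => gaussianReal 0 (w q)) :=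
    (aux_int_coord w p).mul_bdd hG.aestronglyMeasurable
      (c := C) (ae_of_all _ (fun x => by simpa using hb x))
  have i2 : Integrable G' (Measure.pi fun q => gaussianReal 0 (w q)) :=
    Integrable.of_bound hG'.aestronglyMeasurable C (ae_of_all _ (fun x => by simpa using hb' x))
  have hu : ∀ ω : P → ℝ, Measurable (fun y : ℝ => Function.update ω p y) := fun ω =>
    measurable_update ω
  rw [← mp.map_eq] at i1 i2 ⊢
  rw [integral_map mp.measurable.aemeasurable i1.aestronglyMeasurable,
    integral_map mp.measurable.aemeasurable i2.aestronglyMeasurable]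
  have i1' := (integrable_map_measure i1.aestronglyMeasurable mp.measurable.aemeasurable).1 i1
  have i2' := (integrable_map_measure i2.aestronglyMeasurable mp.measurable.aemeasurable).1 i2
  simp only [Function.comp_def] at i1' i2'
  rw [integral_prod_symm _ i1', integral_prod_symm _ i2', ← integral_const_mul]
  congr 1; ext ω
  simp only [Function.update_self]
  exact aux_stein1 (w p) hw (fun y => G (Function.update ω p y))
    (fun y => G' (Function.update ω p y)) C (hd ω) (hG.comp (hu ω)) (hG'.comp (hu ω))
    (fun x => hb _) (fun x => hb' _)

lemma aux_mgf (w : P → ℝ≥0) (a : P → ℝ) :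
    Integrable (fun ω : P → ℝ => Real.exp (∑ p, a p * ω p))
      (Measure.pi fun q => gaussianReal 0 (w q)) ∧
    ∫ ω, Real.exp (∑ p, a p * ω p) ∂(Measure.pi fun q => gaussianReal 0 (w q))
      = Real.exp ((∑ p, w p * a p ^ 2) / 2) := by
  simp only [Real.exp_sum]
  constructor
  · exact Integrable.fintype_prod (f := fun p x => Real.exp (a p * x))
      (fun p => integrable_exp_mul_gaussianReal (a p))
  · rw [integral_fintype_prod_eq_prod (𝕜 := ℝ) (fun p x => Real.exp (a p * x)), Finset.sum_div, Real.exp_sum]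
    refine Finset.prod_congr rfl fun p _ => ?_
    have := congrFun (mgf_id_gaussianReal (μ := 0) (v := w p)) (a p)
    simpa [mgf] using this

lemma aux_cos (w : P → ℝ≥0) (a : P → ℝ) :
    ∫ ω, Real.cos (∑ p, a p * ω p) ∂(Measure.pi fun q => gaussianReal 0 (w q))
      = Real.exp (-(∑ p, w p * a p ^ 2) / 2) := by
  have h : ∫ ω, Complex.exp ((∑ p, a p * ω p : ℝ) * Complex.I)
      ∂(Measure.pi fun q => gaussianReal 0 (w q))
      = ((Real.exp (-(∑ p, w p * a p ^ 2) / 2) : ℝ) : ℂ) := by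
    have e : ∀ ω : P → ℝ, Complex.exp ((∑ p, a p * ω p : ℝ) * Complex.I)
      = ∏ p, Complex.exp ((a p * ω p : ℝ) * Complex.I) := by
      intro ω
      rw [← Complex.exp_sum, Complex.ofReal_sum, Finset.sum_mul]
    simp only [e]
    rw [integral_fintype_prod_eq_prod (𝕜 := ℂ) (fun p x => Complex.exp ((a p * x : ℝ) * Complex.I)),
      ← Finset.sum_neg_distrib, Finset.sum_div, Real.exp_sum, Complex.ofReal_prod]
    refine Finset.prod_congr rfl fun p _ => ?_
    have := charFun_gaussianReal (μ := 0) (v := w p) (a p)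
    rw [charFun_apply_real] at this
    push_cast at this ⊢
    rw [this]
    congr 1
    ring
  have h2 := congrArg Complex.re h
  rw [Complex.ofReal_re] at h2
  rw [← h2]
  have hi : Integrable (fun ω : P → ℝ => Complex.exp ((∑ p, a p * ω p : ℝ) * Complex.I))
      (Measure.pi fun q => gaussianReal 0 (w q)) := by
    refine Integrable.of_bound (Measurable.aestronglyMeasurable (by fun_prop)) 1 (ae_of_all _ fun ω => ?_)
    rw [Complex.norm_exp_ofReal_mul_I]
  have := integral_re hi
  simp only [RCLike.re_to_complex] at this
  rw [← this]
  congr 1; ext ω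
  rw [Complex.exp_ofReal_mul_I_re]

lemma aux_one_sub_cos (y : ℝ) : 1 - Real.cos y ≤ |y| := by
  rcases le_total |y| 2 with h | h
  · have h1 := Real.one_sub_sq_div_two_le_cos (x := y)
    have h2 : y ^ 2 = |y| ^ 2 := (sq_abs y).symm
    nlinarith [abs_nonneg y]
  · linarith [Real.neg_one_le_cos y]

lemma aux_abs (w : P → ℝ≥0) (a : P → ℝ) (V : ℝ) (hV : 0 < V) (hVs : ∑ p, w p * a p ^ 2 = V) :
    Real.sqrt V * (1 - Real.exp (-(1 / 2))) ≤
    ∫ ω, |∑ p, a p * ω p| ∂(Measure.pi fun q => gaussianReal 0 (w q)) := by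
  have hs : 0 < Real.sqrt V := Real.sqrt_pos.2 hV
  have hc := aux_cos w (fun p => a p / Real.sqrt V)
  have e1 : ∑ p, (w p : ℝ) * (a p / Real.sqrt V) ^ 2 = 1 := by
    have : ∀ p, (w p : ℝ) * (a p / Real.sqrt V) ^ 2 = (w p * a p ^ 2) / V := by
      intro p; rw [div_pow, Real.sq_sqrt hV.le]; ring
    simp only [this]
    rw [← Finset.sum_div, hVs, div_self hV.ne']
  rw [e1] at hc
  have e2 : ∀ ω : P → ℝ, ∑ p, a p / Real.sqrt V * ω p = (∑ p, a p * ω p) / Real.sqrt V := by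
    intro ω; rw [Finset.sum_div]; exact Finset.sum_congr rfl fun p _ => by ring
  simp only [e2] at hc
  have hint : Integrable (fun ω : P → ℝ => Real.cos ((∑ p, a p * ω p) / Real.sqrt V))
      (Measure.pi fun q => gaussianReal 0 (w q)) :=
    Integrable.of_bound (Measurable.aestronglyMeasurable (by fun_prop)) 1 (ae_of_all _ fun ω => by
      simpa using Real.abs_cos_le_one _)
  have e3 : Real.sqrt V * (1 - Real.exp (-(1 / 2))) =
      ∫ ω, Real.sqrt V * (1 - Real.cos ((∑ p, a p * ω p) / Real.sqrt V))
        ∂(Measure.pi fun q => gaussianReal 0 (w q)) := by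
    rw [integral_const_mul, integral_sub (integrable_const _) hint, hc]
    simp; left; norm_num
  rw [e3]
  refine integral_mono (((integrable_const _).sub hint).const_mul _) ?_ ?_
  · exact (integrable_finsetSum _ fun p _ => (aux_int_coord w p).const_mul _).abs
  · intro ω
    simp only []
    have := aux_one_sub_cos ((∑ p, a p * ω p) / Real.sqrt V)
    rw [abs_div, abs_of_pos hs, le_div_iff₀ hs] at this
    linarith

end prodgauss

section gibbs
variable {P ι : Type*} [Fintype P] [DecidableEq P]

/-- linear Gaussian field -/
noncomputable def gX (a : ι → P → ℝ) (σ : ι) (ω : P → ℝ) : ℝ := ∑ p, a σ p * ω p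

/-- partition function -/
noncomputable def gZ (S : Finset ι) (a : ι → P → ℝ) (β : ℝ) (ω : P → ℝ) : ℝ :=
  ∑ σ ∈ S, Real.exp (β * gX a σ ω)

/-- Gibbs weight -/
noncomputable def gG (S : Finset ι) (a : ι → P → ℝ) (β : ℝ) (σ : ι) (ω : P → ℝ) : ℝ :=
  Real.exp (β * gX a σ ω) / gZ S a β ω

lemma gX_measurable (a : ι → P → ℝ) (σ : ι) : Measurable (gX a σ) := by
  unfold gX; fun_prop

lemma gZ_measurable (S : Finset ι) (a : ι → P → ℝ) (β : ℝ) : Measurable (gZ S a β) := by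
  unfold gZ gX; fun_prop

lemma gG_measurable (S : Finset ι) (a : ι → P → ℝ) (β : ℝ) (σ : ι) :
    Measurable (gG S a β σ) := by
  unfold gG
  exact (((gX_measurable a σ).const_mul β).exp).div (gZ_measurable S a β)

lemma gZ_pos {S : Finset ι} (hS : S.Nonempty) (a : ι → P → ℝ) (β : ℝ) (ω : P → ℝ) :
    0 < gZ S a β ω := Finset.sum_pos (fun _ _ => Real.exp_pos _) hS

lemma gG_pos {S : Finset ι} (hS : S.Nonempty) (a : ι → P → ℝ) (β : ℝ) (σ : ι) (ω : P → ℝ) :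
    0 < gG S a β σ ω := div_pos (Real.exp_pos _) (gZ_pos hS a β ω)

lemma gG_sum {S : Finset ι} (hS : S.Nonempty) (a : ι → P → ℝ) (β : ℝ) (ω : P → ℝ) :
    ∑ σ ∈ S, gG S a β σ ω = 1 := by
  unfold gG
  rw [← Finset.sum_div]
  exact div_self (gZ_pos hS a β ω).ne'

lemma gG_le_one {S : Finset ι} (a : ι → P → ℝ) (β : ℝ) {σ : ι} (hσ : σ ∈ S)
    (ω : P → ℝ) : gG S a β σ ω ≤ 1 := by
  have hS : S.Nonempty := ⟨σ, hσ⟩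
  rw [← gG_sum hS a β ω]
  exact Finset.single_le_sum (f := fun σ => gG S a β σ ω)
    (fun s _ => (gG_pos hS a β s ω).le) hσ

lemma gX_update (a : ι → P → ℝ) (σ : ι) (ω : P → ℝ) (p : P) (y : ℝ) :
    gX a σ (Function.update ω p y) = gX a σ ω + a σ p * (y - ω p) := by
  unfold gX
  rw [← Finset.add_sum_erase univ _ (Finset.mem_univ p),
    ← Finset.add_sum_erase univ (fun q => a σ q * ω q) (Finset.mem_univ p)]
  have : ∑ x ∈ univ.erase p, a σ x * Function.update ω p y x = ∑ x ∈ univ.erase p, a σ x * ω x :=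
    Finset.sum_congr rfl fun q hq => by rw [Function.update_of_ne (Finset.ne_of_mem_erase hq)]
  rw [this, Function.update_self]; ring

lemma gG_deriv {S : Finset ι} (hS : S.Nonempty) (a : ι → P → ℝ) (β : ℝ) (σ : ι) (p : P)
    (ω : P → ℝ) (x : ℝ) :
    HasDerivAt (fun y => gG S a β σ (Function.update ω p y))
      ((fun ω => β * (gG S a β σ ω * a σ p
        - ∑ s ∈ S, gG S a β σ ω * gG S a β s ω * a s p)) (Function.update ω p x)) x := by
  have hx : ∀ s, HasDerivAt (fun y => Real.exp (β * gX a s (Function.update ω p y)))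
      (Real.exp (β * gX a s (Function.update ω p x)) * (β * a s p)) x := by
    intro s
    have h1 : HasDerivAt (fun y => β * gX a s (Function.update ω p y)) (β * a s p) x := by
      simp only [gX_update]
      have := (((((hasDerivAt_id x).sub_const (ω p)).const_mul (a s p)).const_add
        (gX a s ω)).const_mul β)
      simpa using this
    exact h1.exp
  have hz : HasDerivAt (fun y => gZ S a β (Function.update ω p y))
      (∑ s ∈ S, Real.exp (β * gX a s (Function.update ω p x)) * (β * a s p)) x := by
    unfold gZ
    exact HasDerivAt.fun_sum fun s _ => hx s
  have hz0 := (gZ_pos hS a β (Function.update ω p x)).ne'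
  refine ((hx σ).div hz hz0).congr_deriv ?_
  simp only [gG]
  generalize Function.update ω p x = ω' at *
  have : ∑ s ∈ S, Real.exp (β * gX a σ ω') / gZ S a β ω' *
      (Real.exp (β * gX a s ω') / gZ S a β ω') * a s p
      = Real.exp (β * gX a σ ω') / gZ S a β ω' ^ 2 * ∑ s ∈ S, Real.exp (β * gX a s ω') * a s p := by
    rw [Finset.mul_sum]
    refine Finset.sum_congr rfl fun s _ => ?_
    field_simp
  rw [this]
  have h2 : ∑ s ∈ S, Real.exp (β * gX a s ω') * (β * a s p)
      = β * ∑ s ∈ S, Real.exp (β * gX a s ω') * a s p := by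
    rw [Finset.mul_sum]
    exact Finset.sum_congr rfl fun s _ => by ring
  rw [h2]
  field_simp

lemma gibbs_stein (w : P → ℝ≥0) (hw : ∀ p, w p ≠ 0) {S : Finset ι} (a : ι → P → ℝ)
    (β : ℝ) {σ : ι} (hσ : σ ∈ S) (p : P) :
    ∫ ω, ω p * gG S a β σ ω ∂(Measure.pi fun q => gaussianReal 0 (w q))
      = w p * ∫ ω, β * (gG S a β σ ω * a σ p - ∑ s ∈ S, gG S a β σ ω * gG S a β s ω * a s p)
        ∂(Measure.pi fun q => gaussianReal 0 (w q)) := by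
  have hS : S.Nonempty := ⟨σ, hσ⟩
  refine aux_stein w p (hw p) (gG S a β σ) _ (1 + |β| * (|a σ p| + ∑ s ∈ S, |a s p|))
    (gG_measurable S a β σ) ?_ ?_ ?_ (gG_deriv hS a β σ p)
  · have := fun s => gG_measurable S a β s
    fun_prop
  · intro ω
    rw [abs_of_pos (gG_pos hS a β σ ω)]
    have := gG_le_one a β hσ ω
    have h2 : 0 ≤ |β| * (|a σ p| + ∑ s ∈ S, |a s p|) := by positivity
    linarith
  · intro ω
    have h1 : |gG S a β σ ω * a σ p| ≤ |a σ p| := by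
      rw [abs_mul, abs_of_pos (gG_pos hS a β σ ω)]
      exact mul_le_of_le_one_left (abs_nonneg _) (gG_le_one a β hσ ω)
    have h2 : |∑ s ∈ S, gG S a β σ ω * gG S a β s ω * a s p| ≤ ∑ s ∈ S, |a s p| := by
      refine (Finset.abs_sum_le_sum_abs _ _).trans (Finset.sum_le_sum fun s hs => ?_)
      rw [abs_mul, abs_of_pos (mul_pos (gG_pos hS a β σ ω) (gG_pos hS a β s ω))]
      exact mul_le_of_le_one_left (abs_nonneg _)
        (mul_le_one₀ (gG_le_one a β hσ ω) (gG_pos hS a β s ω).le (gG_le_one a β hs ω))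
    rw [abs_mul]
    have h3 := (abs_sub (gG S a β σ ω * a σ p) (∑ s ∈ S, gG S a β σ ω * gG S a β s ω * a s p))
    have := mul_le_mul_of_nonneg_left (h3.trans (add_le_add h1 h2)) (abs_nonneg β)
    linarith

lemma gG_integrable (w : P → ℝ≥0) {S : Finset ι} (a : ι → P → ℝ) (β : ℝ) {σ : ι} (hσ : σ ∈ S) :
    Integrable (gG S a β σ) (Measure.pi fun q => gaussianReal 0 (w q)) :=
  Integrable.of_bound (gG_measurable S a β σ).aestronglyMeasurable 1 (ae_of_all _ fun ω => by
    rw [Real.norm_eq_abs, abs_of_pos (gG_pos ⟨σ, hσ⟩ a β σ ω)]; exact gG_le_one a β hσ ω)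

lemma gGG_integrable (w : P → ℝ≥0) {S : Finset ι} (a : ι → P → ℝ) (β : ℝ) {σ s : ι}
    (hσ : σ ∈ S) (hs : s ∈ S) :
    Integrable (fun ω => gG S a β σ ω * gG S a β s ω)
      (Measure.pi fun q => gaussianReal 0 (w q)) :=
  (gG_integrable w a β hσ).mul_bdd (c := 1) (gG_measurable S a β s).aestronglyMeasurable
    (ae_of_all _ fun ω => by
      rw [Real.norm_eq_abs, abs_of_pos (gG_pos ⟨σ, hσ⟩ a β s ω)]; exact gG_le_one a β hs ω)

lemma gGX_integrable1 (w : P → ℝ≥0) {S : Finset ι} (a : ι → P → ℝ) (β : ℝ) {σ : ι}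
    (hσ : σ ∈ S) (p : P) :
    Integrable (fun ω => ω p * gG S a β σ ω)
      (Measure.pi fun q => gaussianReal 0 (w q)) :=
  (aux_int_coord w p).mul_bdd (c := 1) (gG_measurable S a β σ).aestronglyMeasurable
    (ae_of_all _ fun ω => by
      rw [Real.norm_eq_abs, abs_of_pos (gG_pos ⟨σ, hσ⟩ a β σ ω)]; exact gG_le_one a β hσ ω)

lemma gGX_integrable (w : P → ℝ≥0) {S : Finset ι} (a : ι → P → ℝ) (β : ℝ) :
    Integrable (fun ω => ∑ σ ∈ S, gG S a β σ ω * gX a σ ω)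
      (Measure.pi fun q => gaussianReal 0 (w q)) := by
  refine integrable_finsetSum _ fun σ hσ => ?_
  have : (fun ω => gG S a β σ ω * gX a σ ω) = fun ω => ∑ p, a σ p * (ω p * gG S a β σ ω) := by
    ext ω; unfold gX; rw [Finset.mul_sum]; exact Finset.sum_congr rfl fun p _ => by ring
  rw [this]
  exact integrable_finsetSum _ fun p _ => (gGX_integrable1 w a β hσ p).const_mul _

/-- Gaussian integration by parts for the Gibbs energy. -/
lemma gibbs_ibp (w : P → ℝ≥0) (hw : ∀ p, w p ≠ 0) {S : Finset ι} (hS : S.Nonempty)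
    (a : ι → P → ℝ) (β D : ℝ) (K : ι → ι → ℝ)
    (hK : ∀ σ ∈ S, ∀ s ∈ S, ∑ p, w p * a σ p * a s p = K σ s) (hD : ∀ σ ∈ S, K σ σ = D) :
    ∫ ω, ∑ σ ∈ S, gG S a β σ ω * gX a σ ω ∂(Measure.pi fun q => gaussianReal 0 (w q))
      = β * (D - ∫ ω, ∑ σ ∈ S, ∑ s ∈ S, gG S a β σ ω * gG S a β s ω * K σ s
        ∂(Measure.pi fun q => gaussianReal 0 (w q))) := by
  set μ := (Measure.pi fun q => gaussianReal 0 (w q)) with hμ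
  have h1 : ∀ σ ∈ S, ∫ ω, gG S a β σ ω * gX a σ ω ∂μ
      = β * (D * (∫ ω, gG S a β σ ω ∂μ) - ∑ s ∈ S, K σ s * ∫ ω, gG S a β σ ω * gG S a β s ω ∂μ) := by
    intro σ hσ
    have e1 : ∀ ω, gG S a β σ ω * gX a σ ω = ∑ p, a σ p * (ω p * gG S a β σ ω) := by
      intro ω; unfold gX; rw [Finset.mul_sum]; exact Finset.sum_congr rfl fun p _ => by ring
    simp only [e1]
    rw [integral_finsetSum _ fun p _ => (gGX_integrable1 w a β hσ p).const_mul _]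
    have e2 : ∀ p, ∫ ω, a σ p * (ω p * gG S a β σ ω) ∂μ
        = β * ((w p * a σ p * a σ p) * (∫ ω, gG S a β σ ω ∂μ)
          - ∑ s ∈ S, (w p * a σ p * a s p) * ∫ ω, gG S a β σ ω * gG S a β s ω ∂μ) := by
      intro p
      rw [integral_const_mul, gibbs_stein w hw a β hσ p, integral_const_mul,
        integral_sub ((gG_integrable w a β hσ).mul_const _)
          (integrable_finsetSum _ fun s hs => (gGG_integrable w a β hσ hs).mul_const _),
        integral_finsetSum _ fun s hs => (gGG_integrable w a β hσ hs).mul_const _]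
      simp only [integral_mul_const]
      have : ∑ s ∈ S, (w p * a σ p * a s p) * ∫ ω, gG S a β σ ω * gG S a β s ω ∂μ
        = w p * a σ p * ∑ s ∈ S, (∫ ω, gG S a β σ ω * gG S a β s ω ∂μ) * a s p := by
        rw [Finset.mul_sum]; exact Finset.sum_congr rfl fun s _ => by ring
      rw [this]; ring
    rw [Finset.sum_congr rfl fun p _ => e2 p]
    rw [← Finset.mul_sum, Finset.sum_sub_distrib, ← Finset.sum_mul, hK σ hσ σ hσ, hD σ hσ,
      Finset.sum_comm]
    congr 2
    refine Finset.sum_congr rfl fun s hs => ?_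
    rw [← Finset.sum_mul, hK σ hσ s hs]
  have iX : ∀ σ ∈ S, Integrable (fun ω => gG S a β σ ω * gX a σ ω) μ := by
    intro σ hσ
    have : (fun ω => gG S a β σ ω * gX a σ ω) = fun ω => ∑ p, a σ p * (ω p * gG S a β σ ω) := by
      ext ω; unfold gX; rw [Finset.mul_sum]; exact Finset.sum_congr rfl fun p _ => by ring
    rw [this]
    exact integrable_finsetSum _ fun p _ => (gGX_integrable1 w a β hσ p).const_mul _
  rw [integral_finsetSum _ iX, Finset.sum_congr rfl h1, ← Finset.mul_sum, Finset.sum_sub_distrib,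
    ← Finset.mul_sum, ← integral_finsetSum _ fun σ hσ => gG_integrable w a β hσ]
  simp only [gG_sum hS]
  rw [integral_finsetSum _ fun σ hσ => integrable_finsetSum _ fun s hs =>
    (gGG_integrable w a β hσ hs).mul_const _]
  congr 2
  · simp
  · refine Finset.sum_congr rfl fun σ hσ => ?_
    rw [integral_finsetSum _ fun s hs => (gGG_integrable w a β hσ hs).mul_const _]
    refine Finset.sum_congr rfl fun s hs => ?_
    rw [integral_mul_const, mul_comm]

/-- Gibbs variational lower bound at fixed disorder. -/
lemma gibbs_lower {S : Finset ι} (a : ι → P → ℝ) {β : ℝ} (hβ : 0 < β) {σ₀ : ι} (h0 : σ₀ ∈ S)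
    (ω : P → ℝ) :
    gX a σ₀ ω - Real.log (S.card) / β ≤ ∑ σ ∈ S, gG S a β σ ω * gX a σ ω := by
  have hS : S.Nonempty := ⟨σ₀, h0⟩
  have hc : (0 : ℝ) < S.card := by exact_mod_cast hS.card_pos
  have hZ := gZ_pos hS a β ω
  have hlz : β * gX a σ₀ ω ≤ Real.log (gZ S a β ω) := by
    rw [Real.le_log_iff_exp_le hZ]
    exact Finset.single_le_sum (f := fun σ => Real.exp (β * gX a σ ω))
      (fun s _ => (Real.exp_pos _).le) h0
  have hlog : ∀ σ, Real.log (gG S a β σ ω) = β * gX a σ ω - Real.log (gZ S a β ω) := by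
    intro σ
    unfold gG
    rw [Real.log_div (Real.exp_pos _).ne' hZ.ne', Real.log_exp]
  have hent : ∀ σ ∈ S, gG S a β σ ω - 1 / S.card ≤
      gG S a β σ ω * (β * gX a σ ω - Real.log (gZ S a β ω) + Real.log S.card) := by
    intro σ _
    have hg := gG_pos hS a β σ ω
    rw [← hlog σ, ← Real.log_mul hg.ne' hc.ne']
    have := Real.one_sub_inv_le_log_of_pos (mul_pos hg hc)
    have h2 := mul_le_mul_of_nonneg_left this hg.le
    refine le_trans (le_of_eq ?_) h2
    field_simp
  have hsum := Finset.sum_le_sum hent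
  rw [Finset.sum_sub_distrib, gG_sum hS] at hsum
  have e1 : ∑ σ ∈ S, (1 : ℝ) / S.card = 1 := by
    rw [Finset.sum_const, nsmul_eq_mul]; field_simp
  have e2 : ∑ σ ∈ S, gG S a β σ ω * (β * gX a σ ω - Real.log (gZ S a β ω) + Real.log S.card)
      = β * (∑ σ ∈ S, gG S a β σ ω * gX a σ ω)
        + (- Real.log (gZ S a β ω) + Real.log S.card) * ∑ σ ∈ S, gG S a β σ ω := by
    rw [Finset.mul_sum, Finset.mul_sum, ← Finset.sum_add_distrib]
    exact Finset.sum_congr rfl fun s _ => by ring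
  rw [e1, e2, gG_sum hS] at hsum
  have : β * (gX a σ₀ ω - Real.log S.card / β) ≤ β * ∑ σ ∈ S, gG S a β σ ω * gX a σ ω := by
    rw [mul_sub, mul_div_cancel₀ _ hβ.ne']; linarith
  exact le_of_mul_le_mul_left this hβ

/-- Upper bound on the mean energy. -/
lemma gibbs_upper (w : P → ℝ≥0) {S : Finset ι} (hS : S.Nonempty)
    (a : ι → P → ℝ) (β D : ℝ) (hD : ∀ σ ∈ S, ∑ p, w p * a σ p ^ 2 = D) :
    ∫ ω, ∑ σ ∈ S, gG S a β σ ω * gX a σ ω ∂(Measure.pi fun q => gaussianReal 0 (w q))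
      ≤ Real.log S.card + D / 2 := by
  have hc : (0 : ℝ) < S.card := by exact_mod_cast hS.card_pos
  set μ := (Measure.pi fun q => gaussianReal 0 (w q)) with hμ
  set c : ℝ := S.card * Real.exp (D / 2) with hcdef
  have hcpos : 0 < c := by positivity
  have hi : Integrable (fun ω => ∑ σ ∈ S, Real.exp (gX a σ ω)) μ :=
    integrable_finsetSum _ fun σ _ => (aux_mgf w (a σ)).1
  have hE : ∫ ω, ∑ σ ∈ S, Real.exp (gX a σ ω) ∂μ = c := by
    have hi1 : ∀ σ ∈ S, Integrable (fun ω => Real.exp (gX a σ ω)) μ :=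
      fun σ _ => (aux_mgf w (a σ)).1
    rw [integral_finsetSum _ hi1]
    have : ∀ σ ∈ S, ∫ ω, Real.exp (gX a σ ω) ∂μ = Real.exp (D / 2) := by
      intro σ hσ; rw [← hD σ hσ]; exact (aux_mgf w (a σ)).2
    rw [Finset.sum_congr rfl this, Finset.sum_const, nsmul_eq_mul]
  have hpt : ∀ ω, ∑ σ ∈ S, gG S a β σ ω * gX a σ ω
      ≤ (∑ σ ∈ S, Real.exp (gX a σ ω)) / c + (Real.log c - 1) := by
    intro ω
    set Y := ∑ σ ∈ S, Real.exp (gX a σ ω) with hY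
    have hYp : 0 < Y := Finset.sum_pos (fun _ _ => Real.exp_pos _) hS
    have h1 : ∀ σ ∈ S, gX a σ ω ≤ Real.log Y := fun σ hσ => by
      rw [Real.le_log_iff_exp_le hYp]
      exact Finset.single_le_sum (f := fun σ => Real.exp (gX a σ ω))
        (fun s _ => (Real.exp_pos _).le) hσ
    have h2 : ∑ σ ∈ S, gG S a β σ ω * gX a σ ω ≤ Real.log Y := by
      calc _ ≤ ∑ σ ∈ S, gG S a β σ ω * Real.log Y :=
            Finset.sum_le_sum fun σ hσ =>
              mul_le_mul_of_nonneg_left (h1 σ hσ) (gG_pos hS a β σ ω).le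
        _ = Real.log Y := by rw [← Finset.sum_mul, gG_sum hS, one_mul]
    have h3 := Real.log_le_sub_one_of_pos (div_pos hYp hcpos)
    rw [Real.log_div hYp.ne' hcpos.ne'] at h3
    linarith
  calc _ ≤ ∫ ω, ((∑ σ ∈ S, Real.exp (gX a σ ω)) / c + (Real.log c - 1)) ∂μ :=
        integral_mono (gGX_integrable w a β) ((hi.div_const c).add (integrable_const _)) hpt
    _ = Real.log c := by
        rw [integral_add (hi.div_const c) (integrable_const _), integral_div, hE,
          div_self hcpos.ne']
        simp
    _ = _ := by rw [hcdef, Real.log_mul hc.ne' (Real.exp_pos _).ne', Real.log_exp]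

end gibbs

section model
variable {N : ℕ}

/-- variances -/
noncomputable def gw (p : Fin N × Fin N) : ℝ≥0 := if p.1 = p.2 then 2 else 1

lemma goe_eq (N : ℕ) : goeMeasure N = Measure.pi fun p => gaussianReal 0 (gw p) := rfl

lemma gw_ne (p : Fin N × Fin N) : gw p ≠ 0 := by unfold gw; split_ifs <;> simp

/-- shifted spin -/
noncomputable def tau (α : ℚ) (v : ℝ) (b : Bool) : ℝ := spin b - Real.sqrt v * (2 * (α : ℝ) - 1)

/-- coefficients of the Hamiltonian -/
noncomputable def coef (α : ℚ) (v : ℝ) (σ : Fin N → Bool) (p : Fin N × Fin N) : ℝ :=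
  (Real.sqrt N)⁻¹ * (if p.1 = p.2 then tau α v (σ p.1) * tau α v (σ p.2)
    else if p.1 < p.2 then 2 * (tau α v (σ p.1) * tau α v (σ p.2)) else 0)

lemma sum_tri (f : Fin N → Fin N → ℝ) (hf : ∀ i j, f i j = f j i) :
    ∑ i, ∑ j, f i j = ∑ p : Fin N × Fin N,
      (if p.1 = p.2 then f p.1 p.2 else if p.1 < p.2 then 2 * f p.1 p.2 else 0) := by
  rw [Fintype.sum_prod_type]
  have h : ∑ i, ∑ j, (f i j - (if i = j then f i j else if i < j then 2 * f i j else 0)) =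
      ∑ i, ∑ j, -(f i j - (if i = j then f i j else if i < j then 2 * f i j else 0)) := by
    rw [Finset.sum_comm]
    refine Finset.sum_congr rfl fun i _ => Finset.sum_congr rfl fun j _ => ?_
    rcases lt_trichotomy i j with h | h | h
    · rw [if_neg h.ne', if_neg (not_lt.2 h.le), if_neg h.ne, if_pos h, hf j i]; ring
    · subst h; simp
    · rw [if_neg h.ne, if_pos h, if_neg h.ne', if_neg (not_lt.2 h.le), hf j i]; ring
  simp only [Finset.sum_neg_distrib] at h
  have h0 : ∑ i, ∑ j, (f i j - (if i = j then f i j else if i < j then 2 * f i j else 0)) = 0 := by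
    linarith
  simp only [Finset.sum_sub_distrib] at h0
  linarith

lemma Hv_eq (α : ℚ) (v : ℝ) (ω : (Fin N × Fin N) → ℝ) (σ : Fin N → Bool) :
    Hv α v ω σ = gX (coef α v) σ ω := by
  have h1 : Hv α v ω σ = (Real.sqrt N)⁻¹ * ∑ i, ∑ j,
      Jmat ω i j * (tau α v (σ i) * tau α v (σ j)) := by
    unfold Hv tau
    congr 1
    exact Finset.sum_congr rfl fun i _ => Finset.sum_congr rfl fun j _ => by ring
  rw [h1, sum_tri]
  · unfold gX
    rw [Finset.mul_sum]
    refine Finset.sum_congr rfl fun p _ => ?_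
    unfold coef Jmat
    rcases lt_trichotomy p.1 p.2 with h | h | h
    · simp only [if_neg h.ne, if_pos h, if_pos h.le]; ring
    · simp only [if_pos h, if_pos h.le]; ring
    · simp only [if_neg h.ne', if_neg (not_lt.2 h.le)]; ring
  · intro i j
    have : Jmat ω i j = Jmat ω j i := by
      unfold Jmat
      rcases lt_trichotomy i j with h | h | h
      · rw [if_pos h.le, if_neg (not_le.2 h)]
      · subst h; rfl
      · rw [if_pos h.le, if_neg (not_le.2 h)]
    rw [this]; ring

lemma coef_cov (hN : 0 < N) (α : ℚ) (v : ℝ) (σ s : Fin N → Bool) :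
    ∑ p, (gw p : ℝ) * coef α v σ p * coef α v s p = 2 * N * R12 α v σ s ^ 2 := by
  have hN' : (0 : ℝ) < N := by exact_mod_cast hN
  set x : Fin N → ℝ := fun i => tau α v (σ i) * tau α v (s i) with hx
  have hR : R12 α v σ s = (N : ℝ)⁻¹ * ∑ i, x i := rfl
  have h1 : (∑ i, x i) ^ 2 = ∑ i, ∑ j, x i * x j := by
    rw [sq, Finset.sum_mul_sum]
  have h2 := sum_tri (fun i j => x i * x j) (fun i j => by ring)
  have h3 : ∀ p : Fin N × Fin N, (gw p : ℝ) * coef α v σ p * coef α v s p =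
      2 * (N : ℝ)⁻¹ * (if p.1 = p.2 then x p.1 * x p.2 else if p.1 < p.2 then
        2 * (x p.1 * x p.2) else 0) := by
    intro p
    have hs : (Real.sqrt N)⁻¹ * (Real.sqrt N)⁻¹ = (N : ℝ)⁻¹ := by
      rw [← mul_inv, Real.mul_self_sqrt hN'.le]
    rw [← hs]
    unfold coef gw
    rcases lt_trichotomy p.1 p.2 with h | h | h
    · simp only [if_neg h.ne, if_pos h, hx]; push_cast; ring
    · simp only [if_pos h, hx]; push_cast; ring
    · simp only [if_neg h.ne', if_neg (not_lt.2 h.le)]; ring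
  rw [Finset.sum_congr rfl fun p _ => h3 p, ← Finset.mul_sum, ← h2, ← h1, hR]
  field_simp

lemma spin_sq (b : Bool) : spin b * spin b = 1 := by cases b <;> simp [spin]

lemma R12_self (hN : 0 < N) (α : ℚ) (v : ℝ) {σ : Fin N → Bool} (hσ : σ ∈ SNfinset N α) :
    R12 α v σ σ = Tva α v := by
  have hN' : (0 : ℝ) < N := by exact_mod_cast hN
  have hs : ∑ i, spin (σ i) = (N : ℝ) * (2 * (α : ℝ) - 1) := by
    simpa [SNfinset] using hσ
  unfold R12 Tva
  set m := Real.sqrt v * (2 * (α : ℝ) - 1) with hm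
  have h : ∀ i, (spin (σ i) - m) * (spin (σ i) - m) = (1 + m ^ 2) - 2 * m * spin (σ i) := by
    intro i; have := spin_sq (σ i); linear_combination this
  rw [Finset.sum_congr rfl fun i _ => h i, Finset.sum_sub_distrib, ← Finset.mul_sum, hs]
  simp only [Finset.sum_const, Finset.card_univ, Fintype.card_fin, nsmul_eq_mul]
  field_simp
  ring

/-- The identity `β (T² - E⟨R²⟩) = E⟨H⟩ / (2N)`. -/
lemma main_ibp (hN : 0 < N) (α : ℚ) (v β : ℝ) (hS : (SNfinset N α).Nonempty) :
    ∫ ω, ∑ σ ∈ SNfinset N α, gG (SNfinset N α) (coef α v) β σ ω * gX (coef α v) σ ω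
        ∂(Measure.pi fun p => gaussianReal 0 (gw (N := N) p))
      = 2 * N * (β * (Tva α v ^ 2 - Egibbs2 N α v β (fun σ₁ σ₂ => R12 α v σ₁ σ₂ ^ 2))) := by
  rw [gibbs_ibp gw gw_ne hS (coef α v) β (2 * N * Tva α v ^ 2)
    (fun σ s => 2 * N * R12 α v σ s ^ 2) (fun σ _ s _ => coef_cov hN α v σ s)
    (fun σ hσ => by rw [R12_self hN α v hσ])]
  have : Egibbs2 N α v β (fun σ₁ σ₂ => R12 α v σ₁ σ₂ ^ 2) =
      ∫ ω, ∑ σ ∈ SNfinset N α, ∑ s ∈ SNfinset N α, gG (SNfinset N α) (coef α v) β σ ω *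
        gG (SNfinset N α) (coef α v) β s ω * R12 α v σ s ^ 2
        ∂(Measure.pi fun p => gaussianReal 0 (gw (N := N) p)) := by
    unfold Egibbs2
    rw [goe_eq]
    congr 1; ext ω
    unfold gibbs2
    simp only [Hv_eq, gG, gZ, Finset.sum_div]
    refine Finset.sum_congr rfl fun σ _ => Finset.sum_congr rfl fun s _ => ?_
    ring
  rw [this]
  have e : ∀ ω : (Fin N × Fin N) → ℝ, ∑ σ ∈ SNfinset N α, ∑ s ∈ SNfinset N α, gG (SNfinset N α) (coef α v) β σ ω *
        gG (SNfinset N α) (coef α v) β s ω * (2 * N * R12 α v σ s ^ 2)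
      = 2 * N * ∑ σ ∈ SNfinset N α, ∑ s ∈ SNfinset N α, gG (SNfinset N α) (coef α v) β σ ω *
        gG (SNfinset N α) (coef α v) β s ω * R12 α v σ s ^ 2 := by
    intro ω
    simp only [Finset.mul_sum]
    refine Finset.sum_congr rfl fun σ _ => Finset.sum_congr rfl fun s _ => ?_
    ring
  simp only [e]
  rw [integral_const_mul]
  ring

lemma log_card_le (α : ℚ) (hS : (SNfinset N α).Nonempty) :
    Real.log (SNfinset N α).card ≤ N * Real.log 2 := by
  rw [← Real.log_pow]
  refine Real.log_le_log (by exact_mod_cast hS.card_pos) ?_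
  have := Finset.card_le_univ (SNfinset N α)
  rw [Fintype.card_fun, Fintype.card_bool, Fintype.card_fin] at this
  exact_mod_cast this

lemma main_upper (hN : 0 < N) (α : ℚ) (v β : ℝ) (hS : (SNfinset N α).Nonempty) :
    β * (Tva α v ^ 2 - Egibbs2 N α v β (fun σ₁ σ₂ => R12 α v σ₁ σ₂ ^ 2))
      ≤ (Real.log 2 + Tva α v ^ 2) / 2 := by
  have hN' : (0 : ℝ) < N := by exact_mod_cast hN
  have h := gibbs_upper gw hS (coef α v) β (2 * N * Tva α v ^ 2) (fun σ hσ => by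
    rw [← R12_self hN α v hσ, ← coef_cov hN α v σ σ]
    exact Finset.sum_congr rfl fun p _ => by ring)
  rw [main_ibp hN α v β hS] at h
  have h2 := log_card_le α hS
  have h3 : 2 * N * (β * (Tva α v ^ 2 - Egibbs2 N α v β (fun σ₁ σ₂ => R12 α v σ₁ σ₂ ^ 2)))
    ≤ 2 * N * ((Real.log 2 + Tva α v ^ 2) / 2) := by linarith
  exact le_of_mul_le_mul_left h3 (by positivity)

/-- selection rule -/
noncomputable def sel (k : ℕ) (D : ℕ → ℝ) (i : ℕ) : Bool :=
  if i < k then decide (D i ≤ 0) else if i < 2 * k then decide (0 < D (i - k)) else false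

lemma sel_sum (k : ℕ) (D : ℕ → ℝ) (hk : 2 * k ≤ N) :
    ∑ i : Fin N, spin (sel k D i) = 2 * k - N := by
  rw [Fin.sum_univ_eq_sum_range (fun i => spin (sel k D i)) N]
  obtain ⟨r, rfl⟩ := Nat.exists_eq_add_of_le hk
  rw [Finset.sum_range_add, two_mul, Finset.sum_range_add]
  have h3 : ∑ x ∈ range r, spin (sel k D (k + k + x)) = -r := by
    have : ∀ x, spin (sel k D (k + k + x)) = -1 := by
      intro x
      unfold sel
      rw [if_neg (by omega), if_neg (by omega)]; simp [spin]
    simp [this]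
  have h2 : ∑ x ∈ range k, spin (sel k D (k + x)) = ∑ x ∈ range k, - spin (sel k D x) := by
    refine Finset.sum_congr rfl fun x hx => ?_
    have hx := Finset.mem_range.1 hx
    unfold sel
    rw [if_neg (by omega), if_pos (by omega), if_pos hx, Nat.add_sub_cancel_left]
    by_cases h : D x ≤ 0
    · simp [h, not_lt.2 h, spin]
    · simp [h, not_le.1 h, spin]
  rw [h2, h3, Finset.sum_neg_distrib]
  push_cast; ring

/-- pair fields -/
noncomputable def bco (k l : ℕ) (p : Fin N × Fin N) : ℝ :=
  if 2 * k ≤ p.2.val then (if p.1.val = l then 1 else if p.1.val = l + k then -1 else 0) else 0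

/-- the optimiser -/
noncomputable def sst (k : ℕ) (ω : Fin N × Fin N → ℝ) (i : Fin N) : Bool :=
  sel k (fun l => gX (bco k) l ω) i

lemma sst_mem (α : ℚ) (k : ℕ) (hk : α * (N : ℚ) = k) (hk2 : 2 * k ≤ N) (ω : Fin N × Fin N → ℝ) :
    sst k ω ∈ SNfinset N α := by
  have h : (α : ℝ) * N = k := by exact_mod_cast hk
  have := sel_sum (N := N) k (fun l => gX (bco k) l ω) hk2
  simp only [SNfinset, Finset.mem_filter, Finset.mem_univ, true_and, sst]
  rw [this]; linarith

lemma spin_sel_meas (k i : ℕ) :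
    Measurable (fun ω : Fin N × Fin N → ℝ => spin (sel k (fun l => gX (bco k) l ω) i)) := by
  unfold sel spin
  split_ifs with h1 h2
  · simp only [decide_eq_true_eq]
    exact Measurable.ite (measurableSet_le (gX_measurable _ _) measurable_const)
      measurable_const measurable_const
  · simp only [decide_eq_true_eq]
    exact Measurable.ite (measurableSet_lt measurable_const (gX_measurable _ _))
      measurable_const measurable_const
  all_goals exact measurable_const

lemma bco_var (k l : ℕ) (hl : l < k) (hk : 2 * k ≤ N) :
    ∑ p : Fin N × Fin N, (gw p : ℝ) * bco k l p ^ 2 = 2 * (N - 2 * k) := by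
  have h : ∀ p : Fin N × Fin N, (gw p : ℝ) * bco k l p ^ 2 =
      ((if p.1.val = l then 1 else 0) + (if p.1.val = l + k then 1 else 0)) *
        (if 2 * k ≤ p.2.val then 1 else 0) := by
    intro p
    unfold gw bco
    by_cases hp : 2 * k ≤ p.2.val
    · by_cases h1 : p.1.val = l
      · have : p.1 ≠ p.2 := fun h => by rw [h] at h1; omega
        have h2 : ¬ k = 0 := by omega
        simp [hp, h1, this, h2]
      · by_cases h3 : p.1.val = l + k
        · have : p.1 ≠ p.2 := fun h => by rw [h] at h3; omega
          have h4 : ¬ k = 0 := by omega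
          simp [hp, h3, this, h4]
        · simp [hp, h1, h3]
    · simp [hp]
  rw [Finset.sum_congr rfl fun p _ => h p, Fintype.sum_prod_type]
  simp only []
  rw [← Finset.sum_mul_sum univ univ
      (fun i : Fin N => ((if i.val = l then 1 else 0) + (if i.val = l + k then 1 else 0) : ℝ))
      (fun j : Fin N => (if 2 * k ≤ j.val then 1 else 0 : ℝ)),
    Fin.sum_univ_eq_sum_range (fun i => ((if i = l then 1 else 0) + (if i = l + k then 1 else 0) : ℝ)) N,
    Fin.sum_univ_eq_sum_range (fun j => (if 2 * k ≤ j then 1 else 0 : ℝ)) N]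
  rw [Finset.sum_add_distrib, Finset.sum_ite_eq', Finset.sum_ite_eq',
    if_pos (Finset.mem_range.2 (by omega)), if_pos (Finset.mem_range.2 (by omega))]
  obtain ⟨r, rfl⟩ := Nat.exists_eq_add_of_le hk
  rw [Finset.sum_range_add]
  have e1 : ∑ x ∈ range (2 * k), (if 2 * k ≤ x then 1 else 0 : ℝ) = 0 :=
    Finset.sum_eq_zero fun x hx => by rw [if_neg (by have := Finset.mem_range.1 hx; omega)]
  have e2 : ∑ x ∈ range r, (if 2 * k ≤ 2 * k + x then 1 else 0 : ℝ) = r := by simp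
  rw [e1, e2]; push_cast; ring

lemma sel_main (k : ℕ) (D : ℕ → ℝ) (p : Fin N × Fin N) :
    ∑ l ∈ range k, spin (sel k D l) * bco k l p =
      if p.1.val < 2 * k ∧ 2 * k ≤ p.2.val then spin (sel k D p.1) else 0 := by
  unfold bco
  by_cases hp : 2 * k ≤ p.2.val
  · simp only [hp, if_true, and_true]
    by_cases h1 : p.1.val < k
    · rw [if_pos (by omega), Finset.sum_eq_single p.1.val]
      · simp
      · intro l hl hne
        have := Finset.mem_range.1 hl
        rw [if_neg (by omega), if_neg (by omega), mul_zero]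
      · intro h; exact absurd (Finset.mem_range.2 h1) h
    · by_cases h2 : p.1.val < 2 * k
      · rw [if_pos h2, Finset.sum_eq_single (p.1.val - k)]
        · rw [if_neg (by omega), if_pos (by omega)]
          unfold sel
          rw [if_pos (by omega), if_neg h1, if_pos h2]
          by_cases h : D (p.1.val - k) ≤ 0
          · simp [h, not_lt.2 h, spin]
          · simp [h, not_le.1 h, spin]
        · intro l hl hne
          have := Finset.mem_range.1 hl
          rw [if_neg (by omega), if_neg (by omega), mul_zero]
        · intro h; exact absurd (Finset.mem_range.2 (by omega)) h
      · rw [if_neg h2]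
        refine Finset.sum_eq_zero fun l hl => ?_
        have := Finset.mem_range.1 hl
        rw [if_neg (by omega), if_neg (by omega), mul_zero]
  · simp [hp]

lemma sel_abs (k : ℕ) (D : ℕ → ℝ) {l : ℕ} (hl : l < k) :
    spin (sel k D l) * D l = -|D l| := by
  unfold sel
  rw [if_pos hl]
  by_cases h : D l ≤ 0
  · simp [h, spin, abs_of_nonpos]
  · simp [h, spin, abs_of_pos (not_le.1 h)]

/-- the non-cross coefficient -/
noncomputable def Gres (α : ℚ) (v : ℝ) (k : ℕ) (p : Fin N × Fin N) (ω : Fin N × Fin N → ℝ) : ℝ :=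
  if p.1.val < 2 * k ∧ 2 * k ≤ p.2.val then
    (Real.sqrt N)⁻¹ * (2 * (-(Real.sqrt v * (2 * (α : ℝ) - 1)) *
      (-(1 + Real.sqrt v * (2 * (α : ℝ) - 1)))))
  else coef α v (sst k ω) p

lemma coef_split (α : ℚ) (v : ℝ) (k : ℕ) (p : Fin N × Fin N) (ω : Fin N × Fin N → ℝ) :
    coef α v (sst k ω) p =
      (Real.sqrt N)⁻¹ * 2 * (-(1 + Real.sqrt v * (2 * (α : ℝ) - 1))) *
        (if p.1.val < 2 * k ∧ 2 * k ≤ p.2.val then spin (sst k ω p.1) else 0)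
      + Gres α v k p ω := by
  unfold Gres
  by_cases h : p.1.val < 2 * k ∧ 2 * k ≤ p.2.val
  · simp only [if_pos h]
    have hlt : p.1 < p.2 := by rw [Fin.lt_def]; omega
    have h2 : sst k ω p.2 = false := by
      unfold sst sel
      rw [if_neg (by omega), if_neg (by omega)]
    unfold coef
    rw [if_neg hlt.ne, if_pos hlt, h2]
    have : tau α v false = -(1 + Real.sqrt v * (2 * (α : ℝ) - 1)) := by
      simp [tau, spin]; ring
    rw [this]
    unfold tau
    ring
  · simp only [if_neg h]; ring

lemma coef_meas (α : ℚ) (v : ℝ) (k : ℕ) (p : Fin N × Fin N) :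
    Measurable (fun ω => coef α v (sst k ω) p) := by
  have h := fun i : Fin N => spin_sel_meas (N := N) k i
  have h2 := fun i : Fin N => ((h i).sub_const (Real.sqrt v * (2 * (α : ℝ) - 1)))
  unfold coef tau sst
  refine Measurable.const_mul ?_ _
  split_ifs
  · exact (h2 p.1).mul (h2 p.2)
  · exact ((h2 p.1).mul (h2 p.2)).const_mul 2
  · exact measurable_const

lemma Gres_meas (α : ℚ) (v : ℝ) (k : ℕ) (p : Fin N × Fin N) : Measurable (Gres α v k p) := by
  unfold Gres
  split_ifs
  · exact measurable_const
  · exact coef_meas α v k p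

lemma Gres_bdd (α : ℚ) (v : ℝ) (k : ℕ) (p : Fin N × Fin N) :
    ∃ C : ℝ, 0 ≤ C ∧ ∀ ω, |Gres α v k p ω| ≤ C := by
  refine ⟨|(Real.sqrt N)⁻¹ * (2 * (-(Real.sqrt v * (2 * (α : ℝ) - 1)) *
      (-(1 + Real.sqrt v * (2 * (α : ℝ) - 1)))))| + ∑ σ : Fin N → Bool, |coef α v σ p|,
      by positivity, fun ω => ?_⟩
  have h2 : |coef α v (sst k ω) p| ≤ ∑ σ : Fin N → Bool, |coef α v σ p| :=
    Finset.single_le_sum (f := fun σ : Fin N → Bool => |coef α v σ p|)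
      (fun σ _ => abs_nonneg _) (Finset.mem_univ _)
  have h3 : 0 ≤ ∑ σ : Fin N → Bool, |coef α v σ p| := by positivity
  unfold Gres
  split_ifs
  · linarith
  · linarith [abs_nonneg ((Real.sqrt N)⁻¹ * (2 * (-(Real.sqrt v * (2 * (α : ℝ) - 1)) *
      (-(1 + Real.sqrt v * (2 * (α : ℝ) - 1))))))]

lemma Gres_update (α : ℚ) (v : ℝ) (k : ℕ) (p : Fin N × Fin N) (ω : Fin N × Fin N → ℝ) (y : ℝ) :
    Gres α v k p (Function.update ω p y) = Gres α v k p ω := by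
  unfold Gres
  by_cases h : p.1.val < 2 * k ∧ 2 * k ≤ p.2.val
  · simp only [if_pos h]
  · simp only [if_neg h]
    have : sst k (Function.update ω p y) = sst k ω := by
      have hb : ∀ l, l < k → gX (bco k) l (Function.update ω p y) = gX (bco k) l ω := by
        intro l hl
        rw [gX_update]
        have : bco k l p = 0 := by
          unfold bco
          split_ifs with h1 h2 h3
          · exact absurd ⟨by omega, h1⟩ h
          · exact absurd ⟨by omega, h1⟩ h
          · rfl
          · rfl
        rw [this]; ring
      ext i
      unfold sst sel
      by_cases h1 : i.val < k
      · simp only [if_pos h1, hb _ h1]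
      · by_cases h2 : i.val < 2 * k
        · simp only [if_neg h1, if_pos h2, hb (i.val - k) (by omega)]
        · simp only [if_neg h1, if_neg h2]
    rw [this]

lemma Gres_int (α : ℚ) (v : ℝ) (k : ℕ) (p : Fin N × Fin N) :
    Integrable (fun ω => ω p * Gres α v k p ω)
      (Measure.pi fun p => gaussianReal 0 (gw (N := N) p)) ∧
    ∫ ω, ω p * Gres α v k p ω ∂(Measure.pi fun p => gaussianReal 0 (gw (N := N) p)) = 0 := by
  obtain ⟨C, hC0, hC⟩ := Gres_bdd α v k p
  constructor
  · exact (aux_int_coord gw p).mul_bdd (c := C) (Gres_meas α v k p).aestronglyMeasurable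
      (ae_of_all _ (fun x => by simpa using hC x))
  · rw [aux_stein gw p (gw_ne p) (Gres α v k p) (fun _ => 0) C (Gres_meas α v k p)
      measurable_const hC (fun _ => by simpa using hC0)]
    · simp
    · intro ω x
      simp only [Gres_update]
      exact hasDerivAt_const x _

lemma gX_sst (α : ℚ) (v : ℝ) (k : ℕ) (ω : Fin N × Fin N → ℝ) :
    gX (coef α v) (sst k ω) ω =
      (Real.sqrt N)⁻¹ * 2 * (1 + Real.sqrt v * (2 * (α : ℝ) - 1)) *
        ∑ l ∈ range k, |gX (bco k) l ω| + ∑ p, ω p * Gres α v k p ω := by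
  have h1 : ∑ l ∈ range k, |gX (bco k) l ω| =
      -∑ p, (if p.1.val < 2 * k ∧ 2 * k ≤ p.2.val then spin (sst k ω p.1) else 0) * ω p := by
    have e : ∀ p : Fin N × Fin N,
        (if p.1.val < 2 * k ∧ 2 * k ≤ p.2.val then spin (sst k ω p.1) else 0) =
        ∑ l ∈ range k, spin (sel k (fun l => gX (bco k) l ω) l) * bco k l p := fun p => by
      rw [sel_main]; rfl
    simp only [e, Finset.sum_mul]
    rw [Finset.sum_comm, ← Finset.sum_neg_distrib]
    refine Finset.sum_congr rfl fun l hl => ?_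
    have : spin (sel k (fun l => gX (bco k) l ω) l) * gX (bco k) l ω = -|gX (bco k) l ω| :=
      sel_abs k (fun l => gX (bco k) l ω) (Finset.mem_range.1 hl)
    rw [← neg_eq_iff_eq_neg, ← this]
    conv_lhs => rw [gX]
    rw [Finset.mul_sum]
    exact Finset.sum_congr rfl fun p _ => by ring
  rw [h1]
  conv_lhs => rw [gX]
  rw [Finset.sum_congr rfl fun p _ => by rw [coef_split α v k p ω, add_mul],
    Finset.sum_add_distrib]
  congr 1
  · rw [← Finset.sum_neg_distrib, Finset.mul_sum]
    exact Finset.sum_congr rfl fun p _ => by ring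
  · exact Finset.sum_congr rfl fun p _ => by ring

lemma sst_energy (α : ℚ) (v : ℝ) (k : ℕ) (hk : 2 * k < N)
    (hc : 0 ≤ 1 + Real.sqrt v * (2 * (α : ℝ) - 1)) :
    Integrable (fun ω => gX (coef α v) (sst k ω) ω)
      (Measure.pi fun p => gaussianReal 0 (gw (N := N) p)) ∧
    (Real.sqrt N)⁻¹ * 2 * (1 + Real.sqrt v * (2 * (α : ℝ) - 1)) *
      (k * (Real.sqrt (2 * (N - 2 * k)) * (1 - Real.exp (-(1 / 2)))))
      ≤ ∫ ω, gX (coef α v) (sst k ω) ω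
        ∂(Measure.pi fun p => gaussianReal 0 (gw (N := N) p)) := by
  set μ := Measure.pi fun p => gaussianReal 0 (gw (N := N) p) with hμ
  have i0 : ∀ l, Integrable (fun ω => |gX (bco (N := N) k) l ω|) μ := fun l =>
    (integrable_finsetSum _ fun p _ => (aux_int_coord gw p).const_mul _).abs
  have i1 : Integrable (fun ω => (Real.sqrt N)⁻¹ * 2 * (1 + Real.sqrt v * (2 * (α : ℝ) - 1)) *
        ∑ l ∈ range k, |gX (bco (N := N) k) l ω|) μ :=
    (integrable_finsetSum _ fun l _ => i0 l).const_mul _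
  have i2 : Integrable (fun ω => ∑ p, ω p * Gres (N := N) α v k p ω) μ :=
    integrable_finsetSum _ fun p _ => (Gres_int α v k p).1
  simp only [gX_sst]
  refine ⟨i1.add i2, ?_⟩
  rw [integral_add i1 i2, integral_finsetSum _ fun p _ => (Gres_int α v k p).1,
    Finset.sum_eq_zero fun p _ => (Gres_int α v k p).2, add_zero, integral_const_mul,
    integral_finsetSum _ fun l _ => i0 l]
  refine mul_le_mul_of_nonneg_left ?_ (by positivity)
  have hk' : (2 * k : ℝ) < N := by exact_mod_cast hk
  have : ∀ l ∈ range k, Real.sqrt (2 * (N - 2 * k)) * (1 - Real.exp (-(1 / 2))) ≤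
      ∫ ω, |gX (bco (N := N) k) l ω| ∂μ := fun l hl =>
    aux_abs gw (bco k l) (2 * (N - 2 * k)) (by linarith)
      (bco_var k l (Finset.mem_range.1 hl) hk.le)
  have h2 := Finset.sum_le_sum this
  rw [Finset.sum_const, Finset.card_range, nsmul_eq_mul] at h2
  exact h2

/-- the constant -/
noncomputable def cst (α : ℚ) (v : ℝ) : ℝ :=
  2 * (1 + Real.sqrt v * (2 * (α : ℝ) - 1)) * (α : ℝ) * Real.sqrt (2 * (1 - 2 * α))
    * (1 - Real.exp (-(1 / 2)))

lemma shift_pos (α : ℚ) (hα0 : 0 < α) (v : ℝ) (hv : v ∈ Set.Ioo (0 : ℝ) 1) :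
    0 < 1 + Real.sqrt v * (2 * (α : ℝ) - 1) := by
  have h0 : (0 : ℝ) < α := by exact_mod_cast hα0
  have h1 : Real.sqrt v < 1 := by
    rw [Real.sqrt_lt' one_pos]; simpa using hv.2
  nlinarith [Real.sqrt_nonneg v, mul_nonneg (Real.sqrt_nonneg v) h0.le]

lemma cst_pos (α : ℚ) (hα0 : 0 < α) (hα : α < 1 / 2) (v : ℝ) (hv : v ∈ Set.Ioo (0 : ℝ) 1) :
    0 < cst α v := by
  have h0 : (0 : ℝ) < α := by exact_mod_cast hα0
  have h2 : (α : ℝ) < 1 / 2 := by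
    have : ((α : ℚ) : ℝ) < ((1 / 2 : ℚ) : ℝ) := by exact_mod_cast hα
    simpa using this
  have h3 := shift_pos α hα0 v hv
  have h4 : Real.exp (-(1 / 2)) < 1 := by rw [Real.exp_lt_one_iff]; norm_num
  have h5 : 0 < Real.sqrt (2 * (1 - 2 * α)) := Real.sqrt_pos.2 (by linarith)
  have h6 : 0 < 1 - Real.exp (-(1 / 2)) := by linarith
  unfold cst
  positivity

lemma main_lower (hN : 0 < N) (α : ℚ) (hα0 : 0 < α) (hα : α < 1 / 2) (v : ℝ)
    (hv : v ∈ Set.Ioo (0 : ℝ) 1) (hint : alphaIntegral α N) {β : ℝ} (hβ : 0 < β) :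
    (SNfinset N α).Nonempty ∧
    cst α v / 2 - Real.log 2 / (2 * β) ≤
    β * (Tva α v ^ 2 - Egibbs2 N α v β (fun σ₁ σ₂ => R12 α v σ₁ σ₂ ^ 2)) := by
  have hN' : (0 : ℝ) < N := by exact_mod_cast hN
  obtain ⟨k, hk⟩ := hint
  have hk2 : 2 * k < N := by
    have hNq : (0 : ℚ) < N := by exact_mod_cast hN
    have : (2 * k : ℚ) < N := by rw [← hk]; nlinarith
    exact_mod_cast this
  have hkr : (k : ℝ) = α * N := by
    have : ((α * N : ℚ) : ℝ) = ((k : ℚ) : ℝ) := by rw [hk]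
    push_cast at this; exact this.symm
  have hmem := sst_mem (N := N) α k hk hk2.le
  have hS : (SNfinset N α).Nonempty := ⟨_, hmem 0⟩
  refine ⟨hS, ?_⟩
  obtain ⟨hi, hE⟩ := sst_energy (N := N) α v k hk2 (shift_pos α hα0 v hv).le
  set μ := Measure.pi fun p => gaussianReal 0 (gw (N := N) p) with hμ
  have h1 : ∫ ω, (gX (coef α v) (sst k ω) ω - Real.log (SNfinset N α).card / β) ∂μ ≤
      ∫ ω, ∑ σ ∈ SNfinset N α, gG (SNfinset N α) (coef α v) β σ ω * gX (coef α v) σ ω ∂μ :=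
    integral_mono (hi.sub (integrable_const _)) (gGX_integrable gw _ β)
      (fun ω => gibbs_lower (coef α v) hβ (hmem ω) ω)
  rw [main_ibp hN α v β hS, integral_sub hi (integrable_const _)] at h1
  simp only [integral_const, probReal_univ, one_smul] at h1
  have h2 : Real.log (SNfinset N α).card / β ≤ N * Real.log 2 / β :=
    div_le_div_of_nonneg_right (log_card_le α hS) hβ.le
  have h3 : (Real.sqrt N)⁻¹ * 2 * (1 + Real.sqrt v * (2 * (α : ℝ) - 1)) *
      (k * (Real.sqrt (2 * (N - 2 * k)) * (1 - Real.exp (-(1 / 2))))) = N * cst α v := by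
    have : Real.sqrt (2 * (N - 2 * k)) = Real.sqrt N * Real.sqrt (2 * (1 - 2 * α)) := by
      rw [← Real.sqrt_mul hN'.le, hkr]; congr 1; ring
    rw [this, hkr, cst]
    have hs : Real.sqrt N ≠ 0 := (Real.sqrt_pos.2 hN').ne'
    field_simp
  rw [h3] at hE
  have h4 : 2 * N * (cst α v / 2 - Real.log 2 / (2 * β)) ≤ 2 * N *
      (β * (Tva α v ^ 2 - Egibbs2 N α v β (fun σ₁ σ₂ => R12 α v σ₁ σ₂ ^ 2))) := by
    have : 2 * N * (cst α v / 2 - Real.log 2 / (2 * β)) = N * cst α v - N * Real.log 2 / β := by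
      field_simp
    rw [this]; linarith
  exact le_of_mul_le_mul_left h4 (by positivity)

lemma filt_neBot (α : ℚ) (hα0 : 0 < α) :
    (Filter.atTop ⊓ Filter.principal {N | alphaIntegral α N}).NeBot := by
  rw [Filter.inf_principal_neBot_iff]
  intro U hU
  obtain ⟨M, hM⟩ := Filter.mem_atTop_sets.1 hU
  refine ⟨α.den * M, hM _ (Nat.le_mul_of_pos_left _ α.den_pos), α.num.toNat * M, ?_⟩
  have h1 : ((α.num.toNat : ℤ) : ℚ) = α.num := by
    rw [Int.toNat_of_nonneg (Rat.num_nonneg.2 hα0.le)]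
  push_cast at h1 ⊢
  rw [h1, ← mul_assoc, Rat.mul_den_eq_num]

end model
/-- For every rational `α ∈ (0,1/2)` and every `v ∈ (0,1)` there is a
constant `C₁(v,α) > 0` with
`liminf_{β→∞} liminf_{N→∞} β · E[T(v,α)² − ⟨R₁₂²⟩_v] > C₁(v,α)`,
where the inner liminf is over integers `N` with `αN` an integer. -/
theorem statement9 (α : ℚ) (hα0 : 0 < α) (hα : α < 1 / 2)
    (v : ℝ) (hv : v ∈ Set.Ioo (0 : ℝ) 1) :
    ∃ C₁ : ℝ, 0 < C₁ ∧
      C₁ < Filter.liminf (fun β : ℝ =>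
              Filter.liminf (fun N : ℕ =>
                  β * (Tva α v ^ 2 - Egibbs2 N α v β (fun σ₁ σ₂ => R12 α v σ₁ σ₂ ^ 2)))
                (Filter.atTop ⊓ Filter.principal {N | alphaIntegral α N}))
            Filter.atTop := by
  have hc := cst_pos α hα0 hα v hv
  have hne := filt_neBot α hα0
  set F := Filter.atTop ⊓ Filter.principal {N | alphaIntegral α N} with hF
  have hev : ∀ᶠ N in F, 0 < N ∧ alphaIntegral α N := by
    rw [hF, Filter.eventually_inf_principal]
    filter_upwards [Filter.eventually_gt_atTop 0] with N hN h using ⟨hN, h⟩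
  set f : ℝ → ℕ → ℝ := fun β N =>
    β * (Tva α v ^ 2 - Egibbs2 N α v β (fun σ₁ σ₂ => R12 α v σ₁ σ₂ ^ 2)) with hf
  have hup : ∀ β : ℝ, 0 < β → ∀ᶠ N in F, f β N ≤ (Real.log 2 + Tva α v ^ 2) / 2 := by
    intro β hβ
    filter_upwards [hev] with N hN
    exact main_upper hN.1 α v β (main_lower hN.1 α hα0 hα v hv hN.2 hβ).1
  have hlo : ∀ β : ℝ, 0 < β → ∀ᶠ N in F, cst α v / 2 - Real.log 2 / (2 * β) ≤ f β N := by
    intro β hβ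
    filter_upwards [hev] with N hN
    exact (main_lower hN.1 α hα0 hα v hv hN.2 hβ).2
  have hcob : ∀ β : ℝ, 0 < β → F.IsCoboundedUnder (· ≥ ·) (f β) := fun β hβ =>
    Filter.IsCoboundedUnder.of_frequently_le (hup β hβ).frequently
  have hLup : ∀ β : ℝ, 0 < β → Filter.liminf (f β) F ≤ (Real.log 2 + Tva α v ^ 2) / 2 :=
    fun β hβ => Filter.liminf_le_of_frequently_le (hup β hβ).frequently ⟨_, hlo β hβ⟩
  have hLlo : ∀ β : ℝ, 0 < β →
      cst α v / 2 - Real.log 2 / (2 * β) ≤ Filter.liminf (f β) F :=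
    fun β hβ => Filter.le_liminf_of_le (hcob β hβ) (hlo β hβ)
  refine ⟨cst α v / 8, by positivity, ?_⟩
  have hfin : cst α v / 4 ≤ Filter.liminf (fun β : ℝ => Filter.liminf (f β) F) Filter.atTop := by
    refine Filter.le_liminf_of_le ?_ ?_
    · refine Filter.IsCoboundedUnder.of_frequently_le (a := (Real.log 2 + Tva α v ^ 2) / 2) ?_
      refine Filter.Eventually.frequently ?_
      filter_upwards [Filter.eventually_gt_atTop (0 : ℝ)] with β hβ using hLup β hβ
    · filter_upwards [Filter.eventually_gt_atTop (0 : ℝ),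
        Filter.eventually_ge_atTop (2 * Real.log 2 / cst α v)] with β hβ hβ2
      refine le_trans ?_ (hLlo β hβ)
      rw [div_le_iff₀ hc] at hβ2
      have : Real.log 2 / (2 * β) ≤ cst α v / 4 := by
        rw [div_le_iff₀ (by positivity)]; linarith
      linarith
  linarith
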